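/- arXiv:2406.06214 — 2 statements merged into one kernel-verified Lean document; each statement's English description precedes it below -/
import Mathlib

section
/- There exists a unique representation basis A of the integers such that A(-x,x) ≥ (1/8)·x^{1/3} for all sufficiently large real numbers x. -/
/-!
Build `A` greedily as an increasing union of finite Sidon sets. Given a Sidon set of size `2m` and
an integer `n` which is not yet a sum of two of its elements, adjoin `c` and `n - c`. The result is
again Sidon as soon as `c` avoids the solutions of a few families of linear equations, `O(m³)`
values altogether, so `c` can be chosen of size `O(m³)`. Run `n` through an enumeration of `ℤ`; when
its turn comes and it is already represented, use instead some `n` between `0` and `4m²` that is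
not, which exists because `2m` elements have at most `4m²` pairwise sums. Every step thus adds
exactly two elements, and `A` has at least `2m` elements of absolute value at most `16m³`.
-/

open Filter Set

/-- `repCount A n` is the number of representations of `n` as `a + a'` with
`a ≤ a'` and `a, a' ∈ A`. -/
noncomputable def repCount (A : Set ℤ) (n : ℤ) : ℕ :=
  {p : ℤ × ℤ | p.1 ∈ A ∧ p.2 ∈ A ∧ p.1 ≤ p.2 ∧ p.1 + p.2 = n}.ncard

/-- `A` is a unique representation basis of `ℤ` if `r_A(n) = 1` for all `n`. -/
def IsUniqueRepBasis (A : Set ℤ) : Prop := ∀ n : ℤ, repCount A n = 1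

/-- `countIn A y x` is the number of elements of `A` in the real interval `[y, x]`. -/
noncomputable def countIn (A : Set ℤ) (y x : ℝ) : ℕ :=
  {a : ℤ | a ∈ A ∧ y ≤ (a : ℝ) ∧ (a : ℝ) ≤ x}.ncard

section Sidon

open scoped Finset Pointwise

variable {G : Type*}

/-- A Sidon set: the sums `a + b` with `a, b ∈ A` are pairwise distinct, up to exchanging the
summands. -/
def IsSidon [Add G] (A : Set G) : Prop :=
  ∀ ⦃a⦄, a ∈ A → ∀ ⦃b⦄, b ∈ A → ∀ ⦃c⦄, c ∈ A → ∀ ⦃d⦄, d ∈ A →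
    a + b = c + d → (a = c ∧ b = d) ∨ (a = d ∧ b = c)

lemma isSidon_empty [Add G] : IsSidon (∅ : Set G) := fun _ ha ↦ ha.elim

lemma isSidon_iUnion_of_directed [Add G] {ι : Type*} {f : ι → Set G} (hf : Directed (· ⊆ ·) f)
    (hS : ∀ i, IsSidon (f i)) : IsSidon (⋃ i, f i) := by
  intro a ha b hb c hc d hd
  obtain ⟨i, ha⟩ := mem_iUnion.1 ha
  obtain ⟨j, hb⟩ := mem_iUnion.1 hb
  obtain ⟨k, hc⟩ := mem_iUnion.1 hc
  obtain ⟨l, hd⟩ := mem_iUnion.1 hd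
  obtain ⟨p, hip, hjp⟩ := hf i j
  obtain ⟨q, hkq, hlq⟩ := hf k l
  obtain ⟨r, hpr, hqr⟩ := hf p q
  exact hS r (hpr (hip ha)) (hpr (hjp hb)) (hqr (hkq hc)) (hqr (hlq hd))

variable [AddCommGroup G]

namespace IsSidon

variable {A : Set G}

protected lemma insert {x : G} (hA : IsSidon A) (hx : x ∉ A + A - A) (hxx : 2 • x ∉ A + A) :
    IsSidon (insert x A) := by
  have hadd : ∀ a ∈ A, ∀ b ∈ A, ∀ d ∈ A, x + d ≠ a + b := fun a ha b hb d hd h ↦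
    hx (eq_sub_of_add_eq h ▸ sub_mem_sub (add_mem_add ha hb) hd)
  have hdouble : ∀ a ∈ A, ∀ b ∈ A, x + x ≠ a + b := fun a ha b hb h ↦
    hxx ((two_nsmul x).trans h ▸ add_mem_add ha hb)
  rintro a (rfl | ha) b (rfl | hb) c (rfl | hc) d (rfl | hd) h
  case inr.inr.inr.inr => exact hA ha hb hc hd h
  all_goals grind

lemma insert_pair {c e : G} (hA : IsSidon A) (hc : c ∉ A + A - A) (he : e ∉ A + A - A)
    (hcc : 2 • c ∉ A + A) (hee : 2 • e ∉ A + A) (hce : c + e ∉ A + A) (hsub : c - e ∉ A - A)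
    (hcce : 2 • c - e ∉ A) (heec : 2 • e - c ∉ A) (hne : 2 • c ≠ 2 • e) :
    IsSidon (insert c (insert e A)) := by
  have hcA : c ∉ A := fun h ↦ hc ⟨c + c, add_mem_add h h, c, h, add_sub_cancel_right c c⟩
  refine (hA.insert he hee).insert ?_ ?_
  · rintro ⟨_, ⟨a, ha, b, hb, rfl⟩, d, hd, h⟩
    replace h : a + b = c + d := sub_eq_iff_eq_add.1 h
    rcases hd with hd | hd <;> rcases ha with ha | ha <;> rcases hb with hb | hb
    · exact hne (by grind)
    · exact hcA ((by grind : b = c) ▸ hb)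
    · exact hcA ((by grind : a = c) ▸ ha)
    · exact hce ⟨a, ha, b, hb, by grind⟩
    · exact heec ((by grind : d = 2 • e - c) ▸ hd)
    · exact hsub ⟨b, hb, d, hd, by grind⟩
    · exact hsub ⟨a, ha, d, hd, by grind⟩
    · exact hc ⟨a + b, add_mem_add ha hb, d, hd, by grind⟩
  · rintro ⟨a, ha, b, hb, h⟩
    replace h : a + b = 2 • c := h
    rcases ha with ha | ha <;> rcases hb with hb | hb
    · exact hne (by grind)
    · exact hcce ((by grind : b = 2 • c - e) ▸ hb)
    · exact hcce ((by grind : a = 2 • c - e) ▸ ha)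
    · exact hcc ⟨a, ha, b, hb, h⟩

end IsSidon

lemma exists_mem_forall_notMem_of_sum_card_lt {ι α β : Type*} [Fintype ι]
    {φ : ι → α → β} (hφ : ∀ i, Function.Injective (φ i)) (E : ι → Finset β) {S : Finset α}
    (hS : ∑ i, #(E i) < #S) : ∃ c ∈ S, ∀ i, φ i c ∉ E i := by
  classical
  have hle : #(Finset.univ.biUnion fun i ↦ {c ∈ S | φ i c ∈ E i}) ≤ ∑ i, #(E i) :=
    Finset.card_biUnion_le.trans <| Finset.sum_le_sum fun i _ ↦
      Finset.card_le_card_of_injOn (φ i) (fun c hc ↦ (Finset.mem_filter.1 hc).2) (hφ i).injOn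
  obtain ⟨c, hcS, hc⟩ := Finset.exists_mem_notMem_of_card_lt_card (hle.trans_lt hS)
  exact ⟨c, hcS, fun i hi ↦
    hc (Finset.mem_biUnion.2 ⟨i, Finset.mem_univ i, Finset.mem_filter.2 ⟨hcS, hi⟩⟩)⟩

section TorsionFree

variable [IsAddTorsionFree G] [DecidableEq G] {A S : Finset G}

lemma exists_mem_pair_notMem (n : G) (hS : 2 * #A ^ 3 + 3 * #A ^ 2 + 2 * #A + 1 < #S) :
    ∃ c ∈ S, ∃ e, c + e = n ∧ c ∉ A + A - A ∧ e ∉ A + A - A ∧ 2 • c ∉ A + A ∧ 2 • e ∉ A + A ∧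
      c - e ∉ A - A ∧ 2 • c - e ∉ A ∧ 2 • e - c ∉ A ∧ 2 • c ≠ 2 • e := by
  let φ : Fin 8 → G → G := ![fun c ↦ c, fun c ↦ n - c, fun c ↦ 2 • c, fun c ↦ 2 • (n - c),
    fun c ↦ 2 • c - n, fun c ↦ 3 • c - n, fun c ↦ 2 • n - 3 • c, fun c ↦ 4 • c]
  let E : Fin 8 → Finset G := ![A + A - A, A + A - A, A + A, A + A, A - A, A, A, {2 • n}]
  -- As `G` is torsion-free, each condition `φ i c ∉ E i` excludes at most `#(E i)` values of `c`.
  have hφ (i : Fin 8) : Function.Injective (φ i) := by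
    have hnsmul {k : ℕ} (hk : k ≠ 0) {c d : G} : k • c = k • d ↔ c = d :=
      (nsmul_right_injective hk).eq_iff
    fin_cases i <;> intro c d h <;> simpa [φ, hnsmul] using h
  have hE : ∑ i, #(E i) ≤ 2 * #A ^ 3 + 3 * #A ^ 2 + 2 * #A + 1 := by
    have hadd : #(A + A) ≤ #A ^ 2 := by simpa [sq] using Finset.card_add_le (s := A) (t := A)
    have hsub : #(A - A) ≤ #A ^ 2 := by simpa [sq] using Finset.card_sub_le (s := A) (t := A)
    have hadd_sub : #(A + A - A) ≤ #A ^ 3 :=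
      calc #(A + A - A) ≤ #(A + A) * #A := Finset.card_sub_le
        _ ≤ #A ^ 2 * #A := by gcongr
        _ = #A ^ 3 := by ring
    calc ∑ i, #(E i) = 2 * #(A + A - A) + 2 * #(A + A) + #(A - A) + 2 * #A + 1 := by
          simp [E, Fin.sum_univ_eight]; ring
      _ ≤ 2 * #A ^ 3 + 3 * #A ^ 2 + 2 * #A + 1 := by linarith
  obtain ⟨c, hcS, hc⟩ := exists_mem_forall_notMem_of_sum_card_lt hφ E (hE.trans_lt hS)
  refine ⟨c, hcS, n - c, add_sub_cancel c n, hc 0, hc 1, hc 2, hc 3, ?_, ?_, ?_, ?_⟩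
  · rw [show c - (n - c) = 2 • c - n by abel]
    exact hc 4
  · rw [show 2 • c - (n - c) = 3 • c - n by abel]
    exact hc 5
  · rw [show 2 • (n - c) - c = 2 • n - 3 • c by abel]
    exact hc 6
  · refine fun h ↦ hc 7 (Finset.mem_singleton.2 ?_)
    calc 4 • c = 2 • c + 2 • c := by abel
      _ = 2 • c + 2 • (n - c) := congrArg (2 • c + ·) h
      _ = 2 • n := by abel

lemma IsSidon.exists_insert_pair (hA : IsSidon (A : Set G)) {n : G} (hn : n ∉ A + A)
    (hS : 2 * #A ^ 3 + 3 * #A ^ 2 + 2 * #A + 1 < #S) :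
    ∃ c ∈ S, ∃ e, c + e = n ∧ c ∉ A ∧ e ∉ A ∧ c ≠ e ∧
      IsSidon (insert c (insert e A) : Set G) := by
  have hnotMem {x : G} (hx : x ∉ A + A - A) : x ∉ A := fun h ↦
    hx (Finset.mem_sub.2 ⟨x + x, Finset.add_mem_add h h, x, h, add_sub_cancel_right x x⟩)
  obtain ⟨c, hcS, e, rfl, hc, he, hcc, hee, hsub, hcce, heec, hne⟩ := exists_mem_pair_notMem n hS
  refine ⟨c, hcS, e, rfl, hnotMem hc, hnotMem he, fun h ↦ hne (h ▸ rfl), ?_⟩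
  apply hA.insert_pair <;> norm_cast

end TorsionFree

end Sidon

section Greedy

open scoped Finset Pointwise

lemma exists_notMem_nonneg_le_card (s : Finset ℤ) : ∃ n ∉ s, 0 ≤ n ∧ n ≤ #s := by
  have hcard : #s < #(Finset.Icc (0 : ℤ) #s) := by rw [Int.card_Icc]; omega
  obtain ⟨n, hn, hns⟩ := Finset.exists_mem_notMem_of_card_lt_card hcard
  exact ⟨n, hns, Finset.mem_Icc.1 hn⟩

lemma abs_le_intEquivNat (n : ℤ) : |n| ≤ Equiv.intEquivNat n := by
  cases n with
  | ofNat k =>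
    change |(k : ℤ)| ≤ ((2 * k : ℕ) : ℤ)
    grind
  | negSucc k =>
    change |Int.negSucc k| ≤ ((2 * k + 1 : ℕ) : ℤ)
    grind

/-- The outcome of `m` steps of the greedy construction: a Sidon set with two elements for each
step, of cubic size. -/
structure IsGreedyStage (m : ℕ) (A : Finset ℤ) : Prop where
  card_eq : #A = 2 * m
  isSidon : IsSidon (A : Set ℤ)
  abs_le_of_mem : ∀ a ∈ A, |a| ≤ 16 * (m : ℤ) ^ 3

lemma isGreedyStage_zero : IsGreedyStage 0 ∅ where
  card_eq := rfl
  isSidon := by simpa using isSidon_empty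
  abs_le_of_mem := by simp

namespace IsGreedyStage

variable {m : ℕ} {A : Finset ℤ}

lemma exists_succ_of_notMem (hA : IsGreedyStage m A) {n : ℤ} (hn : n ∉ A + A)
    (hnm : |n| ≤ 4 * (m : ℤ) ^ 2 + m) :
    ∃ B, IsGreedyStage (m + 1) B ∧ A ⊆ B ∧ n ∈ B + B := by
  have hS : 2 * #A ^ 3 + 3 * #A ^ 2 + 2 * #A + 1 <
      #(Finset.Icc (0 : ℤ) (16 * m ^ 3 + 12 * m ^ 2 + 4 * m + 1)) := by
    rw [hA.card_eq, Int.card_Icc]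
    zify
    rw [sub_zero, Int.toNat_of_nonneg (by positivity)]
    linarith
  obtain ⟨c, hc, e, rfl, hcA, heA, hne, hsidon⟩ := hA.isSidon.exists_insert_pair hn hS
  obtain ⟨hc₀, hc₁⟩ := Finset.mem_Icc.1 hc
  obtain ⟨hn₀, hn₁⟩ := abs_le.1 hnm
  refine ⟨insert c (insert e A), ⟨?_, by simpa using hsidon, ?_⟩,
    (Finset.subset_insert _ _).trans (Finset.subset_insert _ _),
    Finset.add_mem_add (by simp) (by simp)⟩
  · rw [Finset.card_insert_of_notMem (by simp [hne, hcA]), Finset.card_insert_of_notMem heA,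
      hA.card_eq]
    ring
  · simp only [Finset.forall_mem_insert, abs_le]
    push_cast
    refine ⟨⟨?_, ?_⟩, ⟨?_, ?_⟩, fun a ha ↦ ?_⟩
    any_goals linarith
    obtain ⟨ha₀, ha₁⟩ := abs_le.1 (hA.abs_le_of_mem a ha)
    constructor <;> linarith

lemma exists_succ (hA : IsGreedyStage m A) {n : ℤ} (hnm : |n| ≤ m) :
    ∃ B, IsGreedyStage (m + 1) B ∧ A ⊆ B ∧ n ∈ B + B := by
  by_cases hn : n ∈ A + A
  · obtain ⟨k, hk, hk₀, hkle⟩ := exists_notMem_nonneg_le_card (A + A)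
    have hcard : #(A + A) ≤ 4 * m ^ 2 := by
      calc #(A + A) ≤ #A * #A := Finset.card_add_le
        _ = 4 * m ^ 2 := by rw [hA.card_eq]; ring
    have hkm : |k| ≤ 4 * (m : ℤ) ^ 2 + m := by rw [abs_of_nonneg hk₀]; zify at hcard; omega
    obtain ⟨B, hB, hAB, -⟩ := hA.exists_succ_of_notMem hk hkm
    exact ⟨B, hB, hAB, Finset.add_subset_add hAB hAB hn⟩
  · exact hA.exists_succ_of_notMem hn (hnm.trans (by simp))

end IsGreedyStage

lemma exists_monotone_isGreedyStage : ∃ f : ℕ → Finset ℤ,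
    Monotone f ∧ (∀ m, IsGreedyStage m (f m)) ∧ ∀ n, ∃ m, n ∈ f m + f m := by
  have htarget (m : ℕ) : |Equiv.intEquivNat.symm m| ≤ m := by
    simpa using abs_le_intEquivNat (Equiv.intEquivNat.symm m)
  choose g hg hsub hmem using fun (m : ℕ) (A : {A : Finset ℤ // IsGreedyStage m A}) ↦
    A.2.exists_succ (htarget m)
  let f : ∀ m, {A : Finset ℤ // IsGreedyStage m A} :=
    Nat.rec ⟨∅, isGreedyStage_zero⟩ fun m A ↦ ⟨g m A, hg m A⟩
  refine ⟨fun m ↦ (f m).1, monotone_nat_of_le_succ fun m ↦ hsub m (f m), fun m ↦ (f m).2, fun n ↦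
    ⟨Equiv.intEquivNat n + 1, ?_⟩⟩
  simpa using hmem (Equiv.intEquivNat n) (f (Equiv.intEquivNat n))

lemma IsSidon.isUniqueRepBasis {A : Set ℤ} (hA : IsSidon A) (hadd : A + A = univ) :
    IsUniqueRepBasis A := by
  intro n
  obtain ⟨a, ha, b, hb, hab, hle⟩ : ∃ a ∈ A, ∃ b ∈ A, a + b = n ∧ a ≤ b := by
    obtain ⟨a, ha, b, hb, hab⟩ := mem_add.1 (hadd ▸ mem_univ n)
    rcases le_total a b with hle | hle
    · exact ⟨a, ha, b, hb, hab, hle⟩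
    · exact ⟨b, hb, a, ha, (add_comm b a).trans hab, hle⟩
  refine Set.ncard_eq_one.2 ⟨(a, b), ?_⟩
  ext ⟨x, y⟩
  simp only [mem_ofPred_eq, mem_singleton_iff, Prod.mk.injEq]
  constructor
  · rintro ⟨hx, hy, hxy, hsum⟩
    have := hA hx hy ha hb (hsum.trans hab.symm)
    omega
  · rintro ⟨rfl, rfl⟩
    exact ⟨ha, hb, hle, hab⟩

lemma card_le_countIn {A : Set ℤ} {B : Finset ℤ} {y x : ℝ} (hBA : (B : Set ℤ) ⊆ A)
    (hB : ∀ b ∈ B, (b : ℝ) ∈ Icc y x) : #B ≤ countIn A y x := by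
  rw [← Set.ncard_coe_finset]
  refine ncard_le_ncard (fun b hb ↦ ⟨hBA hb, hB b hb⟩) ?_
  exact (finite_Icc ⌈y⌉ ⌊x⌋).subset fun a ha ↦ ⟨Int.ceil_le.2 ha.2.1, Int.le_floor.2 ha.2.2⟩

lemma exists_isUniqueRepBasis_two_mul_le_countIn :
    ∃ A, IsUniqueRepBasis A ∧
      ∀ (m : ℕ) (x : ℝ), 16 * (m : ℝ) ^ 3 ≤ x → 2 * m ≤ countIn A (-x) x := by
  obtain ⟨f, hmono, hstage, hrep⟩ := exists_monotone_isGreedyStage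
  let A : Set ℤ := ⋃ m, f m
  have hfA (m : ℕ) : (f m : Set ℤ) ⊆ A := subset_iUnion (fun m ↦ (f m : Set ℤ)) m
  have hsidon : IsSidon A :=
    isSidon_iUnion_of_directed (Monotone.directed_le fun _ _ h ↦ Finset.coe_subset.2 (hmono h))
      fun m ↦ (hstage m).isSidon
  have hadd : A + A = univ := by
    refine eq_univ_of_forall fun n ↦ ?_
    obtain ⟨m, hm⟩ := hrep n
    refine add_subset_add (hfA m) (hfA m) ?_
    exact_mod_cast hm
  refine ⟨A, hsidon.isUniqueRepBasis hadd, fun m x hx ↦ ?_⟩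
  rw [← (hstage m).card_eq]
  refine card_le_countIn (hfA m) fun a ha ↦ abs_le.1 (le_trans ?_ hx)
  exact_mod_cast (hstage m).abs_le_of_mem a ha

end Greedy

lemma eventually_mul_rpow_le_mul_rpow_sub {a b p : ℝ} (hb : 0 ≤ b) (hp : 0 < p) (hab : a < b ^ p)
    (d : ℝ) : ∀ᶠ x : ℝ in atTop, a * x ^ p ≤ (b * x) ^ p - d := by
  have hlarge : ∀ᶠ x : ℝ in atTop, d ≤ (b ^ p - a) * x ^ p :=
    ((tendsto_rpow_atTop hp).const_mul_atTop (sub_pos.2 hab)).eventually_ge_atTop d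
  filter_upwards [hlarge, eventually_ge_atTop 0] with x hd hx
  rw [Real.mul_rpow hb hx]
  linarith

theorem exists_urb_ge_cbrt_general :
    ∃ A : Set ℤ, IsUniqueRepBasis A ∧
      ∀ x : ℝ, 0 ≤ x → (1 / 2 * x) ^ ((1 : ℝ) / 3) - 2 ≤ countIn A (-x) x := by
  obtain ⟨A, hA, hcount⟩ := exists_isUniqueRepBasis_two_mul_le_countIn
  refine ⟨A, hA, fun x hx ↦ ?_⟩
  set y := (1 / 2 * x) ^ ((1 : ℝ) / 3) with hy
  have hy₃ : 2 * y ^ 3 = x := by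
    rw [hy, ← Real.rpow_mul_natCast (by positivity)]
    norm_num
    ring
  have hfloor : 16 * (⌊y / 2⌋₊ : ℝ) ^ 3 ≤ x :=
    calc 16 * (⌊y / 2⌋₊ : ℝ) ^ 3 ≤ 16 * (y / 2) ^ 3 := by gcongr; exact Nat.floor_le (by positivity)
      _ = x := by rw [← hy₃]; ring
  calc y - 2 ≤ 2 * ⌊y / 2⌋₊ := by linarith [Nat.lt_floor_add_one (y / 2)]
    _ ≤ countIn A (-x) x := by exact_mod_cast hcount _ x hfloor

/-- There exists a unique representation basis `A` of the integers such that
`A(-x,x) ≥ (1/8) x^{1/3}` for all sufficiently large real `x`. -/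
theorem exists_urb_ge_cbrt :
    ∃ A : Set ℤ, IsUniqueRepBasis A ∧
      ∀ᶠ x : ℝ in atTop, (1 / 8 : ℝ) * x ^ ((1 : ℝ) / 3) ≤ (countIn A (-x) x : ℝ) := by
  obtain ⟨A, hA, hcount⟩ := exists_urb_ge_cbrt_general
  have hconst : (1 / 8 : ℝ) < (1 / 2) ^ ((1 : ℝ) / 3) := lt_of_lt_of_le (by norm_num) <|
    Real.self_le_rpow_of_le_one (by norm_num) (by norm_num) (by norm_num)
  refine ⟨A, hA, ?_⟩
  filter_upwards [eventually_ge_atTop 0,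
    eventually_mul_rpow_le_mul_rpow_sub (by norm_num) (by norm_num) hconst 2] with x hx hle
  exact hle.trans (hcount x hx)
end

section
/- For every δ > 0 there exists n_δ such that for all integers n > n_δ, min_{1 ≤ ℓ ≤ n} A(−ℓn, ℓn)/√(ℓn/log(ℓn)) < 4√7 + δ holds for every unique representation basis A of the integers. -/
open Filter Set

/-!
A unique representation basis `A` is a Sidon set: the differences of its pairs of distinct elements
are pairwise distinct. Cut `A ∩ [-n², n²)` into `2n` blocks of length `n`. Two elements of one block
differ by less than `n`, so all the blocks together contain at most `2n` ordered pairs of distinct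
elements. Since `2s² ≤ 3s(s - 1) + 2` for integers `s`, the squares of the sizes of the blocks add
up to at most `5n`. Hence `∑ i < n, D i ^ 2 ≤ 10 n`, where `D i` is the number of elements of `A` in
`[-(i + 1)n, -in) ∪ [in, (i + 1)n)`.

If `A(-ℓn, ℓn) ≥ K √ℓ` for all `1 ≤ ℓ ≤ n`, then, as only the endpoint `ℓn` is missing from the
blocks, the partial sums of `D` are at least those of `i ↦ (K - 1) (√(i + 1) - √i)`. Abel summation
against `1 / √(i + 1)` followed by Cauchy–Schwarz yields `(K - 1)² log n ≤ 40 n`. If the ratio were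
at least `4√7` for every `ℓ`, then, as `log (ℓn) ≤ 2 log n`, this would apply to a `K ≥ 7` with
`K² log n = 56 n`, a contradiction.
-/

open scoped Finset

section SidonSet

/-- A Sidon set: the sum of two of its elements determines them up to order. Unique
representation bases are Sidon sets, and the bound on the counting function is proved for these. -/
def IsSidonSet {G : Type*} [Add G] (A : Set G) : Prop :=
  ∀ ⦃a⦄, a ∈ A → ∀ ⦃b⦄, b ∈ A → ∀ ⦃c⦄, c ∈ A → ∀ ⦃d⦄, d ∈ A →
    a + b = c + d → a = c ∧ b = d ∨ a = d ∧ b = c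

theorem IsUniqueRepBasis.isSidonSet {A : Set ℤ} (hA : IsUniqueRepBasis A) : IsSidonSet A := by
  intro a ha b hb c hc d hd habcd
  obtain ⟨p, hp⟩ := Set.ncard_eq_one.1 (hA (a + b))
  have sorted_eq {u v : ℤ} (hu : u ∈ A) (hv : v ∈ A) (huv : u + v = a + b) :
      (min u v, max u v) = p := by
    rw [← Set.mem_singleton_iff, ← hp]
    refine ⟨?_, ?_, min_le_max, (min_add_max u v).trans huv⟩
    · exact min_rec' (· ∈ A) hu hv
    · exact max_rec' (· ∈ A) hu hv
  have h := (sorted_eq ha hb rfl).trans (sorted_eq hc hd habcd.symm).symm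
  simp only [Prod.mk.injEq] at h
  omega

theorem IsSidonSet.injOn_sub_offDiag {G : Type*} [AddCommGroup G] {A : Set G}
    (hA : IsSidonSet A) : Set.InjOn (fun p : G × G ↦ p.1 - p.2) A.offDiag := by
  rintro ⟨a, b⟩ ⟨ha, hb, hab⟩ ⟨c, d⟩ ⟨hc, hd, -⟩ h
  rcases hA ha hd hc hb (sub_eq_sub_iff_add_eq_add.1 h) with ⟨hac, hdb⟩ | ⟨hab', -⟩
  · exact Prod.ext hac hdb.symm
  · exact absurd hab' hab

theorem IsSidonSet.card_le_two_mul_of_abs_sub_le {A : Set ℤ} (hA : IsSidonSet A)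
    {P : Finset (ℤ × ℤ)} {m : ℕ} (hPA : (P : Set (ℤ × ℤ)) ⊆ A.offDiag)
    (hPm : ∀ p ∈ P, |p.1 - p.2| ≤ m) : #P ≤ 2 * m := by
  have card_nonzero : #((Finset.Icc (-m : ℤ) m).erase 0) = 2 * m := by
    rw [Finset.card_erase_of_mem (by simp), Int.card_Icc]
    omega
  rw [← card_nonzero]
  refine Finset.card_le_card_of_injOn (fun p ↦ p.1 - p.2) (fun p hp ↦ ?_)
    (hA.injOn_sub_offDiag.mono hPA)
  rw [Finset.mem_coe, Finset.mem_erase, Finset.mem_Icc, ← abs_le]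
  exact ⟨sub_ne_zero.2 (hPA hp).2.2, hPm p hp⟩

end SidonSet

section Block

open Classical in
/-- The elements of `A` in the `j`-th interval `[jn, (j + 1)n)` of the partition of `ℤ` into
intervals of length `n`. -/
noncomputable def block (A : Set ℤ) (n : ℕ) (j : ℤ) : Finset ℤ :=
  {a ∈ Finset.Ico (j * n) ((j + 1) * n) | a ∈ A}

/-- The number of elements of `A` in the two blocks of length `n` at distance `i * n` from the
origin, that is, in `[-(i + 1)n, -in) ∪ [in, (i + 1)n)`. -/
noncomputable def shellCard (A : Set ℤ) (n i : ℕ) : ℕ :=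
  #(block A n i) + #(block A n (-i - 1))

theorem mem_block {A : Set ℤ} {n : ℕ} {j a : ℤ} :
    a ∈ block A n j ↔ (j * n ≤ a ∧ a < (j + 1) * n) ∧ a ∈ A := by
  simp only [block, Finset.mem_filter, Finset.mem_Ico]

theorem pairwise_disjoint_block (A : Set ℤ) (n : ℕ) :
    Pairwise (Function.onFun Disjoint (block A n)) := by
  intro j k hjk
  refine Finset.disjoint_left.2 fun a haj hak ↦ ?_
  have disjoint_Ico : Disjoint (Set.Ico (j * (n : ℤ)) ((j + 1) * n))
      (Set.Ico (k * (n : ℤ)) ((k + 1) * n)) := pairwise_disjoint_Ico_zsmul (n : ℤ) hjk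
  exact Set.disjoint_left.1 disjoint_Ico (mem_block.1 haj).1 (mem_block.1 hak).1

theorem sum_Ico_neg_natCast {M : Type*} [AddCommMonoid M] (f : ℤ → M) (n : ℕ) :
    ∑ j ∈ Finset.Ico (-n : ℤ) n, f j = ∑ i ∈ Finset.range n, (f i + f (-i - 1)) := by
  induction n with
  | zero => simp
  | succ n ih =>
    rw [Nat.cast_succ, Finset.Ico_succ_succ, Finset.sum_union (by simp),
      Finset.sum_pair (by omega), ih, Finset.sum_range_succ, neg_add', add_comm (f n)]

theorem sum_card_offDiag_block_le {A : Set ℤ} (hA : IsSidonSet A) (n : ℕ) (J : Finset ℤ) :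
    ∑ j ∈ J, #(block A n j).offDiag ≤ 2 * n := by
  have disjoint_offDiag : (J : Set ℤ).PairwiseDisjoint fun j ↦ (block A n j).offDiag := by
    intro j _ k _ hjk
    refine Finset.disjoint_left.2 fun p hpj hpk ↦ ?_
    exact Finset.disjoint_left.1 (pairwise_disjoint_block A n hjk)
      (Finset.mem_offDiag.1 hpj).1 (Finset.mem_offDiag.1 hpk).1
  rw [← Finset.card_biUnion disjoint_offDiag]
  refine hA.card_le_two_mul_of_abs_sub_le (fun p hp ↦ ?_) fun p hp ↦ ?_
  all_goals
    simp only [Finset.coe_biUnion, Set.mem_iUnion, Finset.mem_biUnion, Finset.mem_coe,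
      Finset.mem_offDiag, mem_block, exists_prop] at hp
    obtain ⟨j, -, ⟨⟨hlow₁, hupp₁⟩, hmem₁⟩, ⟨⟨hlow₂, hupp₂⟩, hmem₂⟩, hne⟩ := hp
  · exact ⟨hmem₁, hmem₂, hne⟩
  · rw [abs_le]
    constructor <;> linarith

theorem two_mul_card_sq_le {α : Type*} (s : Finset α) :
    2 * #s ^ 2 ≤ 3 * #s.offDiag + 2 := by
  rw [Finset.offDiag_card]
  zify [Nat.le_mul_self #s]
  -- The claim is `0 ≤ (#s - 1) * (#s - 2)`, which holds because `#s` is an integer.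
  rcases le_or_gt (#s) 1 with h | h
  · interval_cases #s <;> norm_num
  · have : (2 : ℤ) ≤ #s := mod_cast h
    nlinarith

theorem sum_card_block_sq_le {A : Set ℤ} (hA : IsSidonSet A) (n : ℕ) (J : Finset ℤ) :
    ∑ j ∈ J, #(block A n j) ^ 2 ≤ 3 * n + #J := by
  have h : 2 * ∑ j ∈ J, #(block A n j) ^ 2 ≤ 3 * ∑ j ∈ J, #(block A n j).offDiag + #J * 2 := by
    rw [Finset.mul_sum, Finset.mul_sum, ← smul_eq_mul (#J), ← Finset.sum_const,
      ← Finset.sum_add_distrib]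
    exact Finset.sum_le_sum fun j _ ↦ two_mul_card_sq_le _
  have := sum_card_offDiag_block_le hA n J
  omega

theorem sum_shellCard_sq_le {A : Set ℤ} (hA : IsSidonSet A) (n : ℕ) :
    ∑ i ∈ Finset.range n, shellCard A n i ^ 2 ≤ 10 * n := by
  calc ∑ i ∈ Finset.range n, shellCard A n i ^ 2
      ≤ ∑ i ∈ Finset.range n, 2 * (#(block A n i) ^ 2 + #(block A n (-i - 1)) ^ 2) :=
        Finset.sum_le_sum fun i _ ↦ add_sq_le
    _ = 2 * ∑ j ∈ Finset.Ico (-n : ℤ) n, #(block A n j) ^ 2 := by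
        rw [← Finset.mul_sum, sum_Ico_neg_natCast]
    _ ≤ 2 * (3 * n + #(Finset.Ico (-n : ℤ) n)) := by
        gcongr
        exact sum_card_block_sq_le hA n _
    _ = 10 * n := by
        rw [Int.card_Ico]
        omega

theorem countIn_le_one_add_sum_shellCard (A : Set ℤ) {n : ℕ} (hn : 0 < n) (ℓ : ℕ) :
    countIn A (-((ℓ : ℝ) * n)) ((ℓ : ℝ) * n) ≤ 1 + ∑ i ∈ Finset.range ℓ, shellCard A n i := by
  set U := (Finset.Ico (-ℓ : ℤ) ℓ).biUnion (block A n)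
  have hn' : (0 : ℤ) < n := mod_cast hn
  have subset_insert : {a : ℤ | a ∈ A ∧ -((ℓ : ℝ) * n) ≤ a ∧ (a : ℝ) ≤ (ℓ : ℝ) * n} ⊆
      (insert ((ℓ : ℤ) * n) U : Finset ℤ) := by
    rintro a ⟨ha, hlow, hupp⟩
    replace hlow : -(ℓ : ℤ) * n ≤ a := by rw [neg_mul]; exact_mod_cast hlow
    replace hupp : a ≤ ℓ * n := mod_cast hupp
    rw [Finset.mem_coe, Finset.mem_insert, Finset.mem_biUnion]
    refine hupp.eq_or_lt.imp_right fun hupp ↦ ⟨a / n, ?_, ?_⟩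
    · rw [Finset.mem_Ico]
      exact ⟨(Int.le_ediv_iff_mul_le hn').2 hlow, (Int.ediv_lt_iff_lt_mul hn').2 hupp⟩
    · exact mem_block.2 ⟨⟨Int.ediv_mul_le a hn'.ne', Int.lt_ediv_add_one_mul_self a hn'⟩, ha⟩
  calc countIn A (-((ℓ : ℝ) * n)) ((ℓ : ℝ) * n)
      ≤ #(insert ((ℓ : ℤ) * n) U) := by
        rw [← Set.ncard_coe_finset]
        exact Set.ncard_le_ncard subset_insert (Finset.finite_toSet _)
    _ ≤ 1 + #U := by
        rw [add_comm]
        exact Finset.card_insert_le _ _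
    _ ≤ 1 + ∑ j ∈ Finset.Ico (-ℓ : ℤ) ℓ, #(block A n j) := by
        gcongr
        exact Finset.card_biUnion_le
    _ = 1 + ∑ i ∈ Finset.range ℓ, shellCard A n i := by
        rw [sum_Ico_neg_natCast]
        rfl

end Block

section AbelSummation

theorem mul_sum_range_le_sum_range_mul_of_antitone {R : Type*} [Ring R] [PartialOrder R]
    [IsOrderedRing R] {f c : ℕ → R} (hf : Antitone f) (n : ℕ)
    (hc : ∀ l ≤ n, 0 ≤ ∑ i ∈ Finset.range l, c i) :
    f n * ∑ i ∈ Finset.range n, c i ≤ ∑ i ∈ Finset.range n, f i * c i := by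
  induction n with
  | zero => simp
  | succ n ih =>
    calc f (n + 1) * ∑ i ∈ Finset.range (n + 1), c i
        ≤ f n * ∑ i ∈ Finset.range (n + 1), c i :=
          mul_le_mul_of_nonneg_right (hf n.le_succ) (hc _ le_rfl)
      _ = f n * ∑ i ∈ Finset.range n, c i + f n * c n := by
          rw [Finset.sum_range_succ, mul_add]
      _ ≤ ∑ i ∈ Finset.range (n + 1), f i * c i := by
          rw [Finset.sum_range_succ]
          gcongr
          exact ih fun l hl ↦ hc l (hl.trans n.le_succ)

theorem sum_range_mul_le_sum_range_mul_of_antitone {R : Type*} [Ring R] [PartialOrder R]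
    [IsOrderedRing R] {f a b : ℕ → R} (hf : Antitone f) {n : ℕ} (hfn : 0 ≤ f n)
    (hab : ∀ l ≤ n, ∑ i ∈ Finset.range l, a i ≤ ∑ i ∈ Finset.range l, b i) :
    ∑ i ∈ Finset.range n, f i * a i ≤ ∑ i ∈ Finset.range n, f i * b i := by
  have partialSum_nonneg (l : ℕ) (hl : l ≤ n) : 0 ≤ ∑ i ∈ Finset.range l, (b i - a i) := by
    rw [Finset.sum_sub_distrib]
    exact sub_nonneg.2 (hab l hl)
  have h := (mul_nonneg hfn (partialSum_nonneg n le_rfl)).trans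
    (mul_sum_range_le_sum_range_mul_of_antitone hf n partialSum_nonneg)
  simpa only [mul_sub, Finset.sum_sub_distrib, sub_nonneg] using h

theorem cast_harmonic_eq_sum_inv (n : ℕ) :
    (harmonic n : ℝ) = ∑ i ∈ Finset.range n, ((i : ℝ) + 1)⁻¹ := by
  simp [harmonic]

theorem inv_le_two_mul_inv_sqrt_mul_sqrt_sub_sqrt (i : ℕ) :
    ((i : ℝ) + 1)⁻¹ ≤ 2 * ((√(i + 1 : ℝ))⁻¹ * (√(i + 1 : ℝ) - √i)) := by
  have hx2 : √(i + 1 : ℝ) ^ 2 = i + 1 := Real.sq_sqrt (by positivity)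
  have hy2 : √(i : ℝ) ^ 2 = i := Real.sq_sqrt (by positivity)
  have one_le : 1 ≤ 2 * (√(i + 1 : ℝ) * (√(i + 1 : ℝ) - √i)) := by
    linarith [sq_nonneg (√(i + 1 : ℝ) - √i)]
  calc ((i : ℝ) + 1)⁻¹ = 1 / √(i + 1 : ℝ) ^ 2 := by rw [hx2, one_div]
    _ ≤ 2 * (√(i + 1 : ℝ) * (√(i + 1 : ℝ) - √i)) / √(i + 1 : ℝ) ^ 2 := by gcongr
    _ = 2 * ((√(i + 1 : ℝ))⁻¹ * (√(i + 1 : ℝ) - √i)) := by field_simp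

theorem mul_harmonic_le_two_mul_sum_inv_sqrt_mul {D : ℕ → ℝ} {K : ℝ} (hK : 0 ≤ K) {n : ℕ}
    (hD : ∀ l ≤ n, K * √l ≤ ∑ i ∈ Finset.range l, D i) :
    K * harmonic n ≤ 2 * ∑ i ∈ Finset.range n, (√(i + 1 : ℝ))⁻¹ * D i := by
  have antitone_inv_sqrt : Antitone fun i : ℕ ↦ (√(i + 1 : ℝ))⁻¹ := fun i j hij ↦ by
    dsimp only
    gcongr
  calc K * harmonic n
      ≤ K * ∑ i ∈ Finset.range n, 2 * ((√(i + 1 : ℝ))⁻¹ * (√(i + 1 : ℝ) - √i)) := by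
        rw [cast_harmonic_eq_sum_inv]
        gcongr with i
        exact inv_le_two_mul_inv_sqrt_mul_sqrt_sub_sqrt i
    _ = 2 * ∑ i ∈ Finset.range n, (√(i + 1 : ℝ))⁻¹ * (K * (√(i + 1 : ℝ) - √i)) := by
        rw [← Finset.mul_sum, mul_left_comm, Finset.mul_sum]
        simp only [mul_left_comm K]
    _ ≤ 2 * ∑ i ∈ Finset.range n, (√(i + 1 : ℝ))⁻¹ * D i := by
        gcongr 2 * ?_
        refine sum_range_mul_le_sum_range_mul_of_antitone antitone_inv_sqrt (by positivity)
          fun l hl ↦ ?_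
        have telescope := Finset.sum_range_sub (fun i : ℕ ↦ √(i : ℝ)) l
        push_cast at telescope
        rw [← Finset.mul_sum, telescope, Real.sqrt_zero, sub_zero]
        exact hD l hl

theorem sq_mul_harmonic_le_four_mul_sum_sq {D : ℕ → ℝ} {K : ℝ} (hK : 0 ≤ K) {n : ℕ}
    (hD : ∀ l ≤ n, K * √l ≤ ∑ i ∈ Finset.range l, D i) :
    K ^ 2 * harmonic n ≤ 4 * ∑ i ∈ Finset.range n, D i ^ 2 := by
  have sum_inv_sqrt_sq : ∑ i ∈ Finset.range n, (√(i + 1 : ℝ))⁻¹ ^ 2 = harmonic n := by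
    rw [cast_harmonic_eq_sum_inv]
    refine Finset.sum_congr rfl fun i _ ↦ ?_
    rw [inv_pow, Real.sq_sqrt (by positivity)]
  have cauchy_schwarz :=
    Finset.sum_mul_sq_le_sq_mul_sq (Finset.range n) (fun i : ℕ ↦ (√(i + 1 : ℝ))⁻¹) D
  rw [sum_inv_sqrt_sq] at cauchy_schwarz
  have harmonic_nonneg : (0 : ℝ) ≤ harmonic n := by
    rw [cast_harmonic_eq_sum_inv]
    positivity
  rcases harmonic_nonneg.eq_or_lt with harmonic_eq_zero | harmonic_pos
  · rw [← harmonic_eq_zero, mul_zero]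
    positivity
  · refine le_of_mul_le_mul_right ?_ harmonic_pos
    calc K ^ 2 * harmonic n * harmonic n = (K * harmonic n) ^ 2 := by ring
      _ ≤ (2 * ∑ i ∈ Finset.range n, (√(i + 1 : ℝ))⁻¹ * D i) ^ 2 := by
          gcongr ?_ ^ 2
          exact mul_harmonic_le_two_mul_sum_inv_sqrt_mul hK hD
      _ ≤ 4 * (∑ i ∈ Finset.range n, D i ^ 2) * harmonic n := by linarith

end AbelSummation

theorem IsSidonSet.sub_one_sq_mul_log_le {A : Set ℤ} (hA : IsSidonSet A) {n : ℕ} (hn : 0 < n)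
    {K : ℝ} (hK : 1 ≤ K)
    (hcount : ∀ ℓ : ℕ, 1 ≤ ℓ → ℓ ≤ n → K * √ℓ ≤ countIn A (-((ℓ : ℝ) * n)) ((ℓ : ℝ) * n)) :
    (K - 1) ^ 2 * Real.log n ≤ 40 * n := by
  have partialSum_le (ℓ : ℕ) (hℓ : ℓ ≤ n) :
      (K - 1) * √ℓ ≤ ∑ i ∈ Finset.range ℓ, (shellCard A n i : ℝ) := by
    rcases ℓ.eq_zero_or_pos with rfl | hpos
    · simp
    have one_le_sqrt : 1 ≤ √(ℓ : ℝ) := Real.one_le_sqrt.2 (mod_cast hpos)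
    have count_le : (countIn A (-((ℓ : ℝ) * n)) ((ℓ : ℝ) * n) : ℝ) ≤
        1 + ∑ i ∈ Finset.range ℓ, (shellCard A n i : ℝ) :=
      mod_cast countIn_le_one_add_sum_shellCard A hn ℓ
    linarith [hcount ℓ hpos hℓ]
  have sum_sq_le : ∑ i ∈ Finset.range n, (shellCard A n i : ℝ) ^ 2 ≤ 10 * n :=
    mod_cast sum_shellCard_sq_le hA n
  have log_le : Real.log n ≤ harmonic n :=
    (Real.log_le_log (mod_cast hn) (by simp)).trans (log_add_one_le_harmonic n)
  calc (K - 1) ^ 2 * Real.log n ≤ (K - 1) ^ 2 * harmonic n := by gcongr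
    _ ≤ 4 * ∑ i ∈ Finset.range n, (shellCard A n i : ℝ) ^ 2 :=
        sq_mul_harmonic_le_four_mul_sum_sq (sub_nonneg.2 hK) partialSum_le
    _ ≤ 40 * n := by linarith

theorem sqrt_div_two_mul_log_mul_sqrt_le {x y : ℝ} (hx : 1 < x) (hy : 1 ≤ y) (hyx : y ≤ x) :
    √(x / (2 * Real.log x)) * √y ≤ √(y * x / Real.log (y * x)) := by
  have hlog : Real.log (y * x) = Real.log y + Real.log x :=
    Real.log_mul (by positivity) (by positivity)
  have hlogx : 0 < Real.log x := Real.log_pos hx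
  have hlogy : 0 ≤ Real.log y := Real.log_nonneg hy
  have hlogyx : Real.log y ≤ Real.log x := Real.log_le_log (by positivity) hyx
  rw [← Real.sqrt_mul (by positivity), div_mul_eq_mul_div, mul_comm x y]
  gcongr <;> linarith

theorem exists_ell_lt_four_sqrt_seven_add_general {A : Set ℤ} (hA : IsSidonSet A) {n : ℕ}
    (hn : 1 < n) :
    ∃ ℓ : ℕ, 1 ≤ ℓ ∧ ℓ ≤ n ∧
      (countIn A (-((ℓ : ℝ) * n)) ((ℓ : ℝ) * n) : ℝ) /
          √((ℓ : ℝ) * n / Real.log ((ℓ : ℝ) * n)) < 4 * √7 := by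
  by_contra! hcontra
  have one_lt_n : (1 : ℝ) < n := mod_cast hn
  have log_pos : 0 < Real.log n := Real.log_pos one_lt_n
  set K : ℝ := 4 * √7 * √(n / (2 * Real.log n)) with hK
  have K_sq : K ^ 2 * Real.log n = 56 * n := by
    rw [hK, mul_pow, mul_pow, Real.sq_sqrt (by positivity), Real.sq_sqrt (by positivity)]
    field_simp
    norm_num
  have seven_le_K : 7 ≤ K := by
    refine le_of_sq_le_sq (le_of_mul_le_mul_right ?_ log_pos) (by positivity)
    rw [K_sq]
    linarith [Real.log_le_sub_one_of_pos (zero_lt_one.trans one_lt_n)]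
  have mul_sqrt_le_countIn (ℓ : ℕ) (hℓ : 1 ≤ ℓ) (hℓn : ℓ ≤ n) :
      K * √ℓ ≤ countIn A (-((ℓ : ℝ) * n)) ((ℓ : ℝ) * n) := by
    have one_le_ℓ : (1 : ℝ) ≤ ℓ := mod_cast hℓ
    have log_mul_pos : 0 < Real.log (ℓ * n) :=
      Real.log_pos (one_lt_n.trans_le (le_mul_of_one_le_left (by positivity) one_le_ℓ))
    calc K * √ℓ = 4 * √7 * (√(n / (2 * Real.log n)) * √ℓ) := mul_assoc _ _ _
      _ ≤ 4 * √7 * √(ℓ * n / Real.log (ℓ * n)) := by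
          gcongr
          exact sqrt_div_two_mul_log_mul_sqrt_le one_lt_n one_le_ℓ (mod_cast hℓn)
      _ ≤ countIn A (-((ℓ : ℝ) * n)) ((ℓ : ℝ) * n) :=
          (le_div_iff₀ (Real.sqrt_pos.2 (by positivity))).1 (hcontra ℓ hℓ hℓn)
  have upper := hA.sub_one_sq_mul_log_le (by omega) (by linarith) mul_sqrt_le_countIn
  have quadratic : 0 < 7 * (K - 1) ^ 2 - 5 * K ^ 2 := by nlinarith
  linarith [mul_pos quadratic log_pos]

/-- For every `δ > 0` there exists `n_δ` such that for all `n > n_δ` and every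
unique representation basis `A` there is `1 ≤ ℓ ≤ n` with
`A(−ℓn, ℓn)/√(ℓn/log(ℓn)) < 4√7 + δ`. -/
theorem exists_ell_lt_four_sqrt_seven_add (δ : ℝ) (hδ : 0 < δ) :
    ∃ nδ : ℕ, ∀ n : ℕ, nδ < n → ∀ A : Set ℤ, IsUniqueRepBasis A →
      ∃ ℓ : ℕ, 1 ≤ ℓ ∧ ℓ ≤ n ∧
        (countIn A (-((ℓ : ℝ) * n)) ((ℓ : ℝ) * n) : ℝ) /
            Real.sqrt ((ℓ : ℝ) * n / Real.log ((ℓ : ℝ) * n)) <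
          4 * Real.sqrt 7 + δ := by
  refine ⟨1, fun n hn A hA ↦ ?_⟩
  obtain ⟨ℓ, hℓ, hℓn, hlt⟩ := exists_ell_lt_four_sqrt_seven_add_general hA.isSidonSet hn
  exact ⟨ℓ, hℓ, hℓn, hlt.trans (lt_add_of_pos_right _ hδ)⟩
end
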